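/- For every integer l ≥ 2 there exist constants c_1(l) > 0 and c_2(l) > 0 such that for all integers p ≥ 2 with pl even: c_1(l)^p · p^{p(l−1)} ≤ #(D_{l,p}) ≤ #(D*_{l,p}) ≤ c_2(l)^p · p^{p(l−1)}. -/

import Mathlib

/-!
A double-covering of `p` sets is a loopless multigraph with `p` vertices, the sets, whose labelled
edges are the points of the union; it is taken up to renaming the vertices.

Upper bound. An ordered double-covering of `p` sets is determined by the two positions at which
each of the `p l / 2` points lies, so there are at most `(p ^ 2) ^ (p l / 2) = p ^ (p l)` of them.
Since the sets are nonempty, each occurs at most twice, so an unordered double-covering has at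
least `p ! / 2 ^ p` orderings (`factorial_mul_card_Dstar_le`). Now use `p ^ p ≤ e ^ p p !`.

Lower bound. Put `m = p / 2`, rounded down. Permuting all rows but one of an `l × m` array gives
`(m !) ^ (l - 1)` partitions of `l m` points into `m` sets of size `l`. If `p = 2 m`, the union of
two such partitions of the ground set is a double-covering. If `p = 2 m + 1`, then `l = 2 k` is
even; one partition then leaves out the first `k` points, the other the last `k`, and these `2 k`
points form the remaining set. A double-covering arises from at most `2 ^ p` pairs of partitions,
so there are at least `(m !) ^ (2 (l - 1)) / 2 ^ p` of them (`factorial_half_pow_le`), and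
`(m !) ^ 2` is at least `K ^ (-p) p ^ p` for a constant `K` (`self_pow_le_factorial_half`).
-/

/-- The union of all member sets of a set-collection. -/
def unionC (C : Multiset (Finset ℕ)) : Finset ℕ := C.sup

/-- A set-collection is a double-covering if every point of its union lies in
exactly two member sets (counted with multiplicity). -/
def IsDoubleCover (C : Multiset (Finset ℕ)) : Prop :=
  ∀ a ∈ unionC C, Multiset.countP (fun A => a ∈ A) C = 2

/-- A set-collection is an even-covering if every point of its union lies in an
even number of member sets (counted with multiplicity). -/
def IsEvenCover (C : Multiset (Finset ℕ)) : Prop :=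
  ∀ a ∈ unionC C, Even (Multiset.countP (fun A => a ∈ A) C)

/-- Two set-collections are isomorphic: there is a bijection between their
unions mapping the first multiset of sets onto the second. -/
def Isomorphic (C D : Multiset (Finset ℕ)) : Prop :=
  ∃ φ : ℕ → ℕ, Set.BijOn φ ↑(unionC C) ↑(unionC D) ∧
    C.map (Finset.image φ) = D

/-- A set-collection is connected if any two member sets are joined by a chain
of member sets with consecutive nonempty intersections. -/
def ConnectedColl (C : Multiset (Finset ℕ)) : Prop :=
  ∀ A ∈ C, ∀ B ∈ C,
    Relation.ReflTransGen (fun X Y => X ∈ C ∧ Y ∈ C ∧ (X ∩ Y).Nonempty) A B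

/-- `D` is a connected component of `C`: a nonempty connected sub-multiset
separated from the rest of `C`. -/
def IsComponent (C D : Multiset (Finset ℕ)) : Prop :=
  D ≤ C ∧ D ≠ 0 ∧ ConnectedColl D ∧ ∀ B ∈ C - D, ∀ A ∈ D, B ∩ A = ∅

/-- A set-collection is standard if no two of its distinct connected components
are isomorphic. -/
def IsStandard (C : Multiset (Finset ℕ)) : Prop :=
  ∀ D E : Multiset (Finset ℕ),
    IsComponent C D → IsComponent C E → D ≠ E → ¬ Isomorphic D E

/-- `μ_{l,p}(full)`: the number of isomorphism classes of double-coverings of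
`p` sets each of cardinality `l`. -/
noncomputable def muFull (l p : ℕ) : ℕ :=
  Nat.card (Quot (fun C D : {C : Multiset (Finset ℕ) //
      Multiset.card C = p ∧ IsDoubleCover C ∧ ∀ A ∈ C, A.card = l} =>
    Isomorphic C.1 D.1))

/-- `μ_{l,p}(standard)`: the number of isomorphism classes of standard
double-coverings of `p` sets each of cardinality `l`. -/
noncomputable def muStandard (l p : ℕ) : ℕ :=
  Nat.card (Quot (fun C D : {C : Multiset (Finset ℕ) //
      Multiset.card C = p ∧ IsDoubleCover C ∧ IsStandard C ∧ ∀ A ∈ C, A.card = l} =>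
    Isomorphic C.1 D.1))

/-- `μ*_{l,p}(full)`: the number of isomorphism classes of double-coverings of
`p` sets each of cardinality between `1` and `l`. -/
noncomputable def muStarFull (l p : ℕ) : ℕ :=
  Nat.card (Quot (fun C D : {C : Multiset (Finset ℕ) //
      Multiset.card C = p ∧ IsDoubleCover C ∧ ∀ A ∈ C, 1 ≤ A.card ∧ A.card ≤ l} =>
    Isomorphic C.1 D.1))

/-- The family `D_{l,p}` of double-coverings of `p` sets of cardinality `l`
contained in `{1,…,pl/2}`. -/
def Dfull (l p : ℕ) : Set (Multiset (Finset ℕ)) :=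
  {C | Multiset.card C = p ∧ IsDoubleCover C ∧
    (∀ A ∈ C, A ⊆ Finset.Icc 1 (p * l / 2)) ∧ ∀ A ∈ C, A.card = l}

/-- The family `D*_{l,p}` of double-coverings of `p` sets of cardinality
between `1` and `l` contained in `{1,…,pl/2}`. -/
def Dstar (l p : ℕ) : Set (Multiset (Finset ℕ)) :=
  {C | Multiset.card C = p ∧ IsDoubleCover C ∧
    (∀ A ∈ C, A ⊆ Finset.Icc 1 (p * l / 2)) ∧ ∀ A ∈ C, 1 ≤ A.card ∧ A.card ≤ l}

/-- The Rademacher function `r_n(x) = sign (sin (2^n π x))`. -/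
noncomputable def rademacher (n : ℕ) (x : ℝ) : ℝ :=
  Real.sign (Real.sin (2 ^ n * Real.pi * x))

/-- The Walsh function `w_A = ∏_{k ∈ A} r_k`. -/
noncomputable def walsh (A : Finset ℕ) (x : ℝ) : ℝ :=
  ∏ k ∈ A, rademacher k x

/-! ### Generalities on collections -/

lemma mem_unionC {C : Multiset (Finset ℕ)} {a : ℕ} : a ∈ unionC C ↔ ∃ A ∈ C, a ∈ A := by
  unfold unionC
  induction C using Multiset.induction_on with
  | empty => simp
  | cons B C ih => simp [ih]

lemma exists_fin_map_eq {α : Type*} {C : Multiset α} {p : ℕ} (h : C.card = p) :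
    ∃ f : Fin p → α, (Finset.univ : Finset (Fin p)).val.map f = C := by
  subst h
  induction C using Quotient.inductionOn with
  | h L =>
    refine ⟨L.get, ?_⟩
    change (Finset.univ : Finset (Fin L.length)).val.map L.get = (L : Multiset α)
    rw [Fin.univ_val_map, List.ofFn_get]

lemma Dfull_subset_Dstar {l : ℕ} (hl : 1 ≤ l) (p : ℕ) : Dfull l p ⊆ Dstar l p := by
  rintro C ⟨h1, h2, h3, h4⟩
  exact ⟨h1, h2, h3, fun A hA => by rw [h4 A hA]; exact ⟨hl, le_rfl⟩⟩

lemma Dstar_finite (l p : ℕ) : (Dstar l p).Finite := by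
  refine (Set.finite_range fun f : Fin p → (Finset.Icc 1 (p * l / 2)).powerset =>
    (Finset.univ : Finset (Fin p)).val.map fun i => (f i : Finset ℕ)).subset ?_
  rintro C ⟨h1, -, h3, -⟩
  obtain ⟨f, rfl⟩ := exists_fin_map_eq h1
  exact ⟨fun i => ⟨f i, Finset.mem_powerset.2
    (h3 _ (Multiset.mem_map_of_mem _ (Finset.mem_univ i)))⟩, rfl⟩

/-! ### Partitions of an interval from permutations -/

open Finset in
/-- The `i`-th block of the partition of `{c + 1, …, c + (L + 1) m}` given by permutations
`σ 0, …, σ (L - 1)` of `Fin m`. The interval is read as an array with `L + 1` rows of length `m`;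
the block takes column `i` in the row `0` and column `σ r i` in the row `r + 1`. -/
def permBlock (c L m : ℕ) (σ : Fin L → Equiv.Perm (Fin m)) (i : Fin m) : Finset ℕ :=
  univ.image fun r : Fin (L + 1) =>
    c + 1 + (finProdFinEquiv (r, (Fin.cons 1 σ : Fin (L + 1) → Equiv.Perm (Fin m)) r i)).val

/-- The collection of the `m` blocks `permBlock c L m σ i`. -/
def permBlocks (c L m : ℕ) (σ : Fin L → Equiv.Perm (Fin m)) : Multiset (Finset ℕ) :=
  (Finset.univ : Finset (Fin m)).val.map (permBlock c L m σ)

lemma mem_permBlock_array {c L m : ℕ} {σ : Fin L → Equiv.Perm (Fin m)} {i : Fin m}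
    (r : Fin (L + 1)) (j : Fin m) :
    c + 1 + (finProdFinEquiv (r, j)).val ∈ permBlock c L m σ i ↔
      (Fin.cons 1 σ : Fin (L + 1) → Equiv.Perm (Fin m)) r i = j := by
  simp only [permBlock, Finset.mem_image, Finset.mem_univ, true_and]
  constructor
  · rintro ⟨s, hs⟩
    have h := finProdFinEquiv.injective (Fin.ext (Nat.add_left_cancel hs))
    simp only [Prod.mk.injEq] at h
    obtain ⟨rfl, h⟩ := h
    exact h
  · intro h
    exact ⟨r, by rw [h]⟩

lemma card_permBlock (c L m : ℕ) (σ : Fin L → Equiv.Perm (Fin m)) (i : Fin m) :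
    (permBlock c L m σ i).card = L + 1 := by
  rw [permBlock, Finset.card_image_of_injective, Finset.card_univ, Fintype.card_fin]
  intro r s h
  have h := finProdFinEquiv.injective (Fin.ext (Nat.add_left_cancel h))
  exact congrArg Prod.fst h

lemma permBlock_subset (c L m : ℕ) (σ : Fin L → Equiv.Perm (Fin m)) (i : Fin m) :
    permBlock c L m σ i ⊆ Finset.Icc (c + 1) (c + (L + 1) * m) := by
  intro a ha
  simp only [permBlock, Finset.mem_image, Finset.mem_univ, true_and] at ha
  obtain ⟨r, rfl⟩ := ha
  rw [Finset.mem_Icc]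
  have := (finProdFinEquiv (r, (Fin.cons 1 σ : Fin (L + 1) → Equiv.Perm (Fin m)) r i)).isLt
  omega

/-- The blocks partition the interval `{c + 1, …, c + (L + 1) m}`. -/
lemma countP_permBlocks (c L m : ℕ) (σ : Fin L → Equiv.Perm (Fin m)) (a : ℕ) :
    (permBlocks c L m σ).countP (fun A => a ∈ A) =
      if a ∈ Finset.Icc (c + 1) (c + (L + 1) * m) then 1 else 0 := by
  rw [permBlocks, Multiset.countP_map]
  change (Finset.univ.filter fun i => a ∈ permBlock c L m σ i).card = _
  split_ifs with h
  · rw [Finset.mem_Icc] at h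
    obtain ⟨⟨r, j⟩, hx⟩ := (finProdFinEquiv (m := L + 1) (n := m)).surjective
      ⟨a - (c + 1), by omega⟩
    have ha : a = c + 1 + (finProdFinEquiv (r, j)).val := by rw [hx]; simp only; omega
    rw [Finset.card_eq_one]
    refine ⟨((Fin.cons 1 σ : Fin (L + 1) → Equiv.Perm (Fin m)) r).symm j, ?_⟩
    ext i
    rw [Finset.mem_filter, ha, mem_permBlock_array, Finset.mem_singleton, Equiv.eq_symm_apply]
    simp
  · rw [Finset.card_eq_zero, Finset.filter_eq_empty_iff]
    exact fun i _ hi => h (permBlock_subset c L m σ i hi)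

/-- Row `0` tells the blocks apart, and the other rows then give back the permutations. -/
lemma permBlocks_injective (c L m : ℕ) : Function.Injective (permBlocks c L m) := by
  intro σ τ h
  funext r
  ext1 i
  have hi : permBlock c L m σ i ∈ permBlocks c L m τ := by
    rw [← h]
    exact Multiset.mem_map_of_mem _ (Finset.mem_univ i)
  obtain ⟨j, -, hj⟩ := Multiset.mem_map.1 hi
  have h0 : c + 1 + (finProdFinEquiv ((0 : Fin (L + 1)), i)).val ∈ permBlock c L m τ j := by
    rw [hj, mem_permBlock_array]; simp
  rw [mem_permBlock_array] at h0
  obtain rfl : j = i := by simpa using h0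
  have h1 : c + 1 + (finProdFinEquiv (r.succ, τ r j)).val ∈ permBlock c L m σ j := by
    rw [← hj, mem_permBlock_array]; simp
  rw [mem_permBlock_array] at h1
  simpa using h1

/-! ### Lower bound for the double-coverings by `l`-sets -/

/-- Two block partitions of intervals of length `(L + 1) m`, shifted by `k` against each other,
cover the middle of `{1, …, (L + 1) m + k}` twice and both ends once. A collection `S` that covers
both ends once more completes them to a double-covering. From the completed collection `C` the
first partition is one of the `2 ^ p` sub-multisets of `C`, and it determines the second. -/
lemma factorial_pow_le_card_Dfull {L m p k : ℕ} (S : Multiset (Finset ℕ))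
    (hp : 2 * m + S.card = p) (hN : p * (L + 1) / 2 = (L + 1) * m + k)
    (hS : ∀ A ∈ S, A ⊆ Finset.Icc 1 ((L + 1) * m + k) ∧ A.card = L + 1)
    (hk : k ≤ (L + 1) * m)
    (hc : ∀ a ∈ Finset.Icc 1 ((L + 1) * m + k), S.countP (fun A => a ∈ A) =
      (if a ≤ k then 1 else 0) + (if (L + 1) * m < a then 1 else 0)) :
    (m.factorial) ^ (2 * L) ≤ 2 ^ p * Nat.card ↥(Dfull (L + 1) p) := by
  classical
  have hmem : ∀ (σ τ : Fin L → Equiv.Perm (Fin m)) (A : Finset ℕ),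
      A ∈ permBlocks k L m σ + permBlocks 0 L m τ + S →
      A ⊆ Finset.Icc 1 ((L + 1) * m + k) ∧ A.card = L + 1 := by
    intro σ τ A hA
    rcases Multiset.mem_add.1 hA with hA | hA
    · rcases Multiset.mem_add.1 hA with hA | hA
      · obtain ⟨i, -, rfl⟩ := Multiset.mem_map.1 hA
        exact ⟨(permBlock_subset k L m σ i).trans (Finset.Icc_subset_Icc (by omega) (by omega)),
          card_permBlock ..⟩
      · obtain ⟨i, -, rfl⟩ := Multiset.mem_map.1 hA
        exact ⟨(permBlock_subset 0 L m τ i).trans (Finset.Icc_subset_Icc (by omega) (by omega)),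
          card_permBlock ..⟩
    · exact hS A hA
  have hD : ∀ σ τ : Fin L → Equiv.Perm (Fin m),
      permBlocks k L m σ + permBlocks 0 L m τ + S ∈ Dfull (L + 1) p := by
    intro σ τ
    refine ⟨?_, ?_, ?_, fun A hA => (hmem σ τ A hA).2⟩
    · simp only [permBlocks, Multiset.card_add, Multiset.card_map, Finset.card_val,
        Finset.card_univ, Fintype.card_fin]
      omega
    · intro a ha
      obtain ⟨A, hA, haA⟩ := mem_unionC.1 ha
      have haI := (hmem σ τ A hA).1 haA
      rw [Multiset.countP_add, Multiset.countP_add, countP_permBlocks, countP_permBlocks, hc a haI]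
      simp only [Finset.mem_Icc] at haI ⊢
      split_ifs <;> omega
    · intro A hA
      rw [hN]
      exact (hmem σ τ A hA).1
  have : Finite ↥(Dfull (L + 1) p) :=
    ((Dstar_finite (L + 1) p).subset (Dfull_subset_Dstar (by omega) p)).to_subtype
  have : Fintype ↥(Dfull (L + 1) p) := Fintype.ofFinite _
  let F : (Fin L → Equiv.Perm (Fin m)) × (Fin L → Equiv.Perm (Fin m)) → ↥(Dfull (L + 1) p) :=
    fun x => ⟨_, hD x.1 x.2⟩
  have key := Finset.card_le_mul_card_image_of_maps_to (f := F) (s := Finset.univ)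
    (t := Finset.univ) (fun _ _ => Finset.mem_univ _) (2 ^ p) (by
      rintro ⟨C, hC⟩ -
      calc _ ≤ (Multiset.powerset C).toFinset.card := by
            apply Finset.card_le_card_of_injOn (fun x => permBlocks k L m x.1)
            · rintro ⟨σ, τ⟩ hx
              have hx : permBlocks k L m σ + permBlocks 0 L m τ + S = C := by
                simpa [F] using hx
              rw [Finset.mem_coe, Multiset.mem_toFinset, Multiset.mem_powerset, ← hx, add_assoc]
              exact Multiset.le_add_right _ _
            · rintro ⟨σ, τ⟩ hx ⟨σ', τ'⟩ hx' h
              have hx : permBlocks k L m σ + permBlocks 0 L m τ + S = C := by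
                simpa [F] using hx
              have hx' : permBlocks k L m σ' + permBlocks 0 L m τ' + S = C := by
                simpa [F] using hx'
              obtain rfl : σ = σ' := permBlocks_injective k L m h
              have h2 := add_left_cancel (add_right_cancel (hx.trans hx'.symm))
              rw [permBlocks_injective 0 L m h2]
        _ ≤ (Multiset.powerset C).card := Multiset.toFinset_card_le _
        _ = 2 ^ p := by rw [Multiset.card_powerset, hC.1])
  rw [Nat.card_eq_fintype_card]
  simpa [Fintype.card_perm, Finset.card_univ, ← pow_add, two_mul] using key

lemma factorial_half_pow_le {L p : ℕ} (hp : 2 ≤ p) (he : Even (p * (L + 1))) :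
    ((p / 2).factorial) ^ (2 * L) ≤ 2 ^ p * Nat.card ↥(Dfull (L + 1) p) := by
  rcases Nat.even_or_odd' p with ⟨m, rfl | rfl⟩
  · rw [Nat.mul_div_cancel_left m (by norm_num)]
    refine factorial_pow_le_card_Dfull (k := 0) 0 (by simp) ?_ (by simp) (by simp) ?_
    · rw [mul_assoc, Nat.mul_div_cancel_left _ (by norm_num), mul_comm, add_zero]
    · intro a ha
      rw [Finset.mem_Icc] at ha
      rw [if_neg (by omega), if_neg (by omega)]
      rfl
  · obtain ⟨k, hk⟩ : Even (L + 1) := by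
      rcases Nat.even_mul.1 he with h | h
      · exact absurd h (by simp)
      · exact h
    have hm : 1 ≤ m := by omega
    have hkm : k ≤ (L + 1) * m := by nlinarith
    rw [show (2 * m + 1) / 2 = m by omega]
    -- One extra set consists of the `k` first and the `k` last points, where `L + 1 = 2 k`.
    refine factorial_pow_le_card_Dfull (k := k)
      {Finset.Icc 1 k ∪ Finset.Icc ((L + 1) * m + 1) ((L + 1) * m + k)} (by simp) ?_ ?_ hkm ?_
    · rw [show (2 * m + 1) * (L + 1) = 2 * ((L + 1) * m + k) by rw [hk]; ring]
      exact Nat.mul_div_cancel_left _ (by norm_num)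
    · intro A hA
      rw [Multiset.mem_singleton] at hA
      subst hA
      constructor
      · refine Finset.union_subset ?_ ?_ <;> apply Finset.Icc_subset_Icc <;> omega
      · rw [Finset.card_union_of_disjoint, Nat.card_Icc, Nat.card_Icc]
        · omega
        · rw [Finset.disjoint_left]
          intro a ha hb
          rw [Finset.mem_Icc] at ha hb
          omega
    · intro a ha
      rw [Finset.mem_Icc] at ha
      rw [← Multiset.cons_zero, Multiset.countP_cons, Multiset.countP_zero]
      simp only [Finset.mem_union, Finset.mem_Icc]
      split_ifs <;> omega

/-! ### Upper bound by edge codes -/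

/-- The edge code of an ordering `f` of a double-covering: each point of the ground set names the
two positions containing it, a pair of equal positions standing for an uncovered point. -/
lemma exists_code {l p : ℕ} (hp : 0 < p) (f : Fin p → Finset ℕ)
    (hf : (Finset.univ : Finset (Fin p)).val.map f ∈ Dstar l p) (a : ℕ) :
    ∃ e : Fin p × Fin p, ∀ k, a ∈ f k ↔ e.1 ≠ e.2 ∧ (k = e.1 ∨ k = e.2) := by
  by_cases ha : ∃ k, a ∈ f k
  · obtain ⟨k, hk⟩ := ha
    have h := hf.2.1 a (mem_unionC.2
      ⟨f k, Multiset.mem_map_of_mem _ (Finset.mem_univ k), hk⟩)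
    rw [Multiset.countP_map] at h
    change (Finset.univ.filter fun i => a ∈ f i).card = 2 at h
    obtain ⟨i, j, hij, h⟩ := Finset.card_eq_two.1 h
    refine ⟨(i, j), fun k => ?_⟩
    have := Finset.ext_iff.1 h k
    simp only [Finset.mem_filter, Finset.mem_univ, true_and, Finset.mem_insert,
      Finset.mem_singleton] at this
    simp [this, hij]
  · push Not at ha
    exact ⟨(⟨0, hp⟩, ⟨0, hp⟩), fun k => by simp [ha k]⟩

/-- In a double-covering by nonempty sets, no set occurs more than twice. -/
lemma card_filter_eq_le_two {l p : ℕ} (f : Fin p → Finset ℕ)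
    (hf : (Finset.univ : Finset (Fin p)).val.map f ∈ Dstar l p) (A : Finset ℕ) :
    (Finset.univ.filter fun k => f k = A).card ≤ 2 := by
  by_cases hA : ∃ k, f k = A
  · obtain ⟨k, rfl⟩ := hA
    have hk : f k ∈ (Finset.univ : Finset (Fin p)).val.map f :=
      Multiset.mem_map_of_mem _ (Finset.mem_univ k)
    obtain ⟨a, ha⟩ := Finset.card_pos.1 (hf.2.2.2 _ hk).1
    have h := hf.2.1 a (mem_unionC.2 ⟨f k, hk, ha⟩)
    rw [Multiset.countP_map] at h
    change (Finset.univ.filter fun i => a ∈ f i).card = 2 at h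
    rw [← h]
    refine Finset.card_le_card fun i hi => ?_
    simp only [Finset.mem_filter, Finset.mem_univ, true_and] at hi ⊢
    rwa [hi]
  · push Not at hA
    rw [Finset.filter_false_of_mem fun k _ => hA k]
    simp

/-- A collection together with a permutation of its positions gives an ordered collection, hence
an edge code; at most `2 ^ p` permutations give the same ordered collection. -/
lemma factorial_mul_card_Dstar_le {l p : ℕ} (hp : 0 < p) (he : Even (p * l)) :
    p.factorial * Nat.card ↥(Dstar l p) ≤ 2 ^ p * p ^ (p * l) := by
  classical
  have : Finite ↥(Dstar l p) := (Dstar_finite l p).to_subtype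
  have : Fintype ↥(Dstar l p) := Fintype.ofFinite _
  choose f hf using fun C : ↥(Dstar l p) => exists_fin_map_eq C.2.1
  have hfσ : ∀ (σ : Equiv.Perm (Fin p)) C,
      (Finset.univ : Finset (Fin p)).val.map (f C ∘ σ) = C.1 := by
    intro σ C
    rw [← Multiset.map_map, Multiset.map_univ_val_equiv, hf]
  have hmem : ∀ (σ : Equiv.Perm (Fin p)) C,
      (Finset.univ : Finset (Fin p)).val.map (f C ∘ σ) ∈ Dstar l p := by
    intro σ C
    rw [hfσ]
    exact C.2
  choose e hcode using fun (x : Equiv.Perm (Fin p) × ↥(Dstar l p)) (a : Fin (p * l / 2)) =>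
    exists_code hp (f x.2 ∘ x.1) (hmem x.1 x.2) (a.val + 1)
  have he_inj : ∀ x y, e x = e y → f x.2 ∘ x.1 = f y.2 ∘ y.1 := by
    intro x y hxy
    funext k
    have hsub : ∀ z : Equiv.Perm (Fin p) × ↥(Dstar l p),
        (f z.2 ∘ z.1) k ⊆ Finset.Icc 1 (p * l / 2) := fun z =>
      (hmem z.1 z.2).2.2.1 _ (Multiset.mem_map_of_mem _ (Finset.mem_univ k))
    ext a
    by_cases ha : a ∈ Finset.Icc 1 (p * l / 2)
    · rw [Finset.mem_Icc] at ha
      obtain ⟨b, rfl⟩ : ∃ b : Fin (p * l / 2), a = b.val + 1 := ⟨⟨a - 1, by omega⟩, by simp; omega⟩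
      rw [hcode x b k, hcode y b k, hxy]
    · exact ⟨fun h => absurd (hsub x h) ha, fun h => absurd (hsub y h) ha⟩
  have key := Finset.card_le_mul_card_image_of_maps_to (f := e) (s := Finset.univ)
    (t := Finset.univ) (fun _ _ => Finset.mem_univ _) (2 ^ p) (by
      intro c _
      rcases Finset.eq_empty_or_nonempty (Finset.univ.filter fun x => e x = c) with h0 | ⟨y, hy⟩
      · rw [h0]; simp
      · have hy : e y = c := by simpa using hy
        have hfib : ∀ x, e x = c → x.2 = y.2 ∧ ∀ i, f y.2 (x.1 i) = f y.2 (y.1 i) := by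
          intro x hx
          have h := he_inj x y (hx.trans hy.symm)
          have h2 : x.2 = y.2 := by
            apply Subtype.ext
            rw [← hfσ x.1 x.2, ← hfσ y.1 y.2, h]
          refine ⟨h2, fun i => ?_⟩
          have := congrFun h i
          rwa [h2] at this
        calc _ ≤ (Fintype.piFinset fun i : Fin p =>
                Finset.univ.filter fun k => f y.2 k = f y.2 (y.1 i)).card := by
              apply Finset.card_le_card_of_injOn (fun x i => x.1 i)
              · intro x hx
                have hx : e x = c := by simpa using hx
                simpa using (hfib x hx).2
              · intro x hx x' hx' h
                have hx : e x = c := by simpa using hx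
                have hx' : e x' = c := by simpa using hx'
                exact Prod.ext (Equiv.ext (congrFun h)) ((hfib x hx).1.trans (hfib x' hx').1.symm)
          _ = ∏ i : Fin p, (Finset.univ.filter fun k => f y.2 k = f y.2 (y.1 i)).card :=
              Fintype.card_piFinset _
          _ ≤ ∏ _i : Fin p, 2 := Finset.prod_le_prod' fun i _ =>
              card_filter_eq_le_two _ (by rw [hf]; exact y.2.2) _
          _ = 2 ^ p := by simp)
  rw [Nat.card_eq_fintype_card]
  have hpow : (p * p) ^ (p * l / 2) = p ^ (p * l) := by
    rw [← pow_two, ← pow_mul, Nat.two_mul_div_two_of_even he]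
  simpa [Fintype.card_perm, Finset.card_univ, Fintype.card_prod, hpow] using key

/-! ### Factorials against powers -/

lemma self_pow_le_exp_mul_factorial (n : ℕ) :
    (n : ℝ) ^ n ≤ Real.exp 1 ^ n * n.factorial := by
  have h := Real.pow_div_factorial_le_exp (n : ℝ) (Nat.cast_nonneg n) n
  rw [div_le_iff₀ (by exact_mod_cast n.factorial_pos)] at h
  rwa [← Real.exp_nat_mul, mul_one]

/-- With `m = p / 2`, so that `p ≤ 2 m + 1` and `p ≤ 3 m`, one has
`p ^ p ≤ p (3 m) ^ (2 m) ≤ 2 ^ p 9 ^ m e ^ (2 m) (m !) ^ 2`. -/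
lemma self_pow_le_factorial_half {p : ℕ} (hp : 2 ≤ p) :
    (p : ℝ) ^ p ≤ (18 * Real.exp 1 ^ 2) ^ p * ((p / 2).factorial : ℝ) ^ 2 := by
  obtain ⟨m, hm⟩ : ∃ m, m = p / 2 := ⟨_, rfl⟩
  rw [← hm]
  have hp1 : (1 : ℝ) ≤ p := by exact_mod_cast (by omega : 1 ≤ p)
  have he1 : (1 : ℝ) ≤ 9 * Real.exp 1 ^ 2 := by
    have := one_le_pow₀ (n := 2) (Real.one_le_exp (zero_le_one' ℝ))
    linarith
  have h3 : (p : ℝ) ≤ 3 * m := by exact_mod_cast (by omega : p ≤ 3 * m)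
  have h2 : (p : ℝ) ≤ 2 ^ p := by exact_mod_cast Nat.lt_two_pow_self.le
  calc (p : ℝ) ^ p ≤ (p : ℝ) ^ (2 * m + 1) := pow_le_pow_right₀ hp1 (by omega)
    _ = p * (p : ℝ) ^ (2 * m) := by ring
    _ ≤ 2 ^ p * (3 * m) ^ (2 * m) := by gcongr
    _ = 2 ^ p * (9 ^ m * ((m : ℝ) ^ m) ^ 2) := by
        rw [mul_pow, pow_mul, ← pow_mul (m : ℝ), mul_comm 2 m]; norm_num
    _ ≤ 2 ^ p * (9 ^ m * (Real.exp 1 ^ m * m.factorial) ^ 2) := by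
        gcongr; exact self_pow_le_exp_mul_factorial m
    _ = 2 ^ p * (9 * Real.exp 1 ^ 2) ^ m * (m.factorial : ℝ) ^ 2 := by ring
    _ ≤ 2 ^ p * (9 * Real.exp 1 ^ 2) ^ p * (m.factorial : ℝ) ^ 2 := by
        gcongr
        omega
    _ = (18 * Real.exp 1 ^ 2) ^ p * (m.factorial : ℝ) ^ 2 := by
        rw [← mul_pow]; ring

/-- for every `l ≥ 2` there are constants `c₁(l), c₂(l) > 0` with
`c₁(l)^p p^{p(l-1)} ≤ #(D_{l,p}) ≤ #(D*_{l,p}) ≤ c₂(l)^p p^{p(l-1)}`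
for all `p ≥ 2` with `pl` even. -/
theorem stmt5 (l : ℕ) (hl : 2 ≤ l) :
    ∃ c₁ c₂ : ℝ, 0 < c₁ ∧ 0 < c₂ ∧ ∀ p : ℕ, 2 ≤ p → Even (p * l) →
      c₁ ^ p * (p : ℝ) ^ (p * (l - 1)) ≤ (Nat.card ↥(Dfull l p) : ℝ) ∧
      Nat.card ↥(Dfull l p) ≤ Nat.card ↥(Dstar l p) ∧
      (Nat.card ↥(Dstar l p) : ℝ) ≤ c₂ ^ p * (p : ℝ) ^ (p * (l - 1)) := by
  obtain ⟨L, rfl⟩ : ∃ L, l = L + 1 := ⟨l - 1, by omega⟩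
  rw [Nat.add_sub_cancel]
  have hK : (0 : ℝ) < 18 * Real.exp 1 ^ 2 := by positivity
  refine ⟨(2 * (18 * Real.exp 1 ^ 2) ^ L)⁻¹, 2 * Real.exp 1, by positivity, by positivity, ?_⟩
  intro p hp he
  refine ⟨?_, ?_, ?_⟩
  · have h1 : ((p / 2).factorial : ℝ) ^ (2 * L) ≤ 2 ^ p * Nat.card ↥(Dfull (L + 1) p) := by
      exact_mod_cast factorial_half_pow_le hp he
    rw [inv_pow, inv_mul_le_iff₀ (by positivity)]
    calc (p : ℝ) ^ (p * L) = ((p : ℝ) ^ p) ^ L := pow_mul ..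
      _ ≤ ((18 * Real.exp 1 ^ 2) ^ p * ((p / 2).factorial : ℝ) ^ 2) ^ L := by
          gcongr; exact self_pow_le_factorial_half hp
      _ = ((18 * Real.exp 1 ^ 2) ^ L) ^ p * ((p / 2).factorial : ℝ) ^ (2 * L) := by
          rw [mul_pow, ← pow_mul, ← pow_mul, ← pow_mul, mul_comm p L]
      _ ≤ ((18 * Real.exp 1 ^ 2) ^ L) ^ p * (2 ^ p * Nat.card ↥(Dfull (L + 1) p)) := by gcongr
      _ = (2 * (18 * Real.exp 1 ^ 2) ^ L) ^ p * Nat.card ↥(Dfull (L + 1) p) := by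
          rw [mul_pow 2]; ring
  · exact Nat.card_mono (Dstar_finite _ p) (Dfull_subset_Dstar (by omega) p)
  · have h1 : (p.factorial : ℝ) * Nat.card ↥(Dstar (L + 1) p) ≤ 2 ^ p * (p : ℝ) ^ (p * (L + 1)) := by
      exact_mod_cast factorial_mul_card_Dstar_le (by omega) he
    have hf : (0 : ℝ) < p.factorial := by exact_mod_cast p.factorial_pos
    refine le_of_mul_le_mul_left ?_ hf
    calc _ ≤ _ := h1
      _ = 2 ^ p * (p : ℝ) ^ (p * L) * (p : ℝ) ^ p := by rw [mul_add, pow_add, mul_one]; ring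
      _ ≤ 2 ^ p * (p : ℝ) ^ (p * L) * (Real.exp 1 ^ p * p.factorial) := by
          gcongr; exact self_pow_le_exp_mul_factorial p
      _ = p.factorial * ((2 * Real.exp 1) ^ p * (p : ℝ) ^ (p * L)) := by rw [mul_pow]; ring
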